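/- Let a_* be the unique positive parameter for which f(·;a_*) is positive on [0,∞) and decays like a multiple of r^{-(N-1)/(p-1)} e^{-r/(p-1)} as r → ∞. Then for every a ∈ (a_*,∞) there exists R(a) ∈ (0,∞) such that f(r;a) > 0 for r ∈ [0,R(a)), f(R(a);a) = 0, and f'(R(a);a) < 0; in particular f(·;a) takes negative values on (0,∞). -/

import Mathlib

/-!
Write `m = 1/(p-1) > 1`, `g = -|f'|^{p-2} f'`, `h(r) = 1 + (N-1)/r` and `ρ(r) = r^{N-1} e^r`, so
that `ρ' = hρ`. As long as `f > 0`, one has `g > 0` on `(0,∞)` (`IsProfileSol.gFun_pos`) and the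
equation becomes the system `f' = -g^m`, `(ρ g)' = ρ f` (`PosSol`). In the variable `s` with
`ds = ρ dr`, the function `w = ρ g` solves the Emden-Fowler equation
`w_ss + q w^m = 0` with `q = ρ^{-(m+1)}`.

The proof is a Pohozaev argument in the manner of Yanagida. With `A = q^{-2/(m+3)} = ρ^θ`,
`θ = 2(m+1)/(m+3)`, the energy
`J = A w_s²/2 - A_s w w_s/2 + A_ss w²/4 + A q w^{m+1}/(m+1)` satisfies `J_s = A_sss w²/4`
(`hasDerivAt_energy`). Since the problem is subcritical, `m(N-2) < N+2`, the coefficient `A_sss`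
changes sign at most once, from positive to negative (`energyRate_pos_of_lt`); for a fast decaying
solution `J` tends to `0` at both ends, so `J > 0` (`energy_pos`).

Let `(f₁, g₁)` be the fast decaying solution with parameter `a_*` and suppose that the solution
`(f₂, g₂)` with parameter `a > a_*` stays positive. Let `σ = g₂/g₁` and `V = f₁ g₂ - f₂ g₁`, so that
`σ' = -V/g₁²`, and `D = J₂ - σ² J₁`, for which `D' = -2 σ σ' J₁` (`hasDerivAt_ratioGap`), because the
terms in `A_sss` cancel. Near `0` one has `g₂ > g₁` and `V > 0`. At a first zero `R` of `V`, `D`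
would be positive, having increased from `0`, and this means `σ(R) > 1`; but `σ` decreases
on `(0,R]`, so `g₂ > g₁` there, and then `ρ V` increases on `(0,R]` and cannot vanish at `R`. Hence
`V > 0` everywhere (`wronskian_pos`), `σ` is bounded at infinity, the second solution decays fast as
well, and `D → 0` at infinity. This contradicts the fact that `D` increases from `0`
(`no_larger_posSol`). Therefore `f` vanishes somewhere, and `g > 0` at its first zero.
-/

open Real Set Filter MeasureTheory

/-- `f` is a solution of the profile equation with parameter `a`:
`f` is C¹ on `[0,∞)` with derivative `f'`, the map `r ↦ |f'(r)|^{p-2} f'(r)` is C¹ on `[0,∞)`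
with derivative `F'`, the ODE
`(|f'|^{p-2}f')'(r) + ((N-1)/r)(|f'|^{p-2}f')(r) + f(r) - |f'(r)|^{p-1} = 0` holds for `r > 0`,
and `f 0 = a`, `f' 0 = 0`. -/
def IsProfileSol (N : ℕ) (p a : ℝ) (f f' F' : ℝ → ℝ) : Prop :=
  (∀ r ∈ Ici (0:ℝ), HasDerivWithinAt f (f' r) (Ici 0) r) ∧
  ContinuousOn f' (Ici 0) ∧
  (∀ r ∈ Ici (0:ℝ), HasDerivWithinAt (fun s => |f' s| ^ (p - 2) * f' s) (F' r) (Ici 0) r) ∧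
  ContinuousOn F' (Ici 0) ∧
  (∀ r, 0 < r →
    F' r + (((N : ℝ) - 1) / r) * (|f' r| ^ (p - 2) * f' r) + f r - |f' r| ^ (p - 1) = 0) ∧
  f 0 = a ∧ f' 0 = 0

/-- `g(r;a) = -|f'(r;a)|^{p-2} f'(r;a)`. -/
noncomputable def gFun (p : ℝ) (f' : ℝ → ℝ) (r : ℝ) : ℝ := -(|f' r| ^ (p - 2) * f' r)

/-- `ρ(r) = r^{N-1} e^r`. -/
noncomputable def rho (N : ℕ) (r : ℝ) : ℝ := r ^ (N - 1) * Real.exp r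

/-- the derivative of `ρ`. -/
noncomputable def rho' (N : ℕ) (r : ℝ) : ℝ :=
  (((N : ℝ) - 1) * r ^ (N - 2) + r ^ (N - 1)) * Real.exp r

/-- `w(r;a) = ρ(r) g(r;a)`. -/
noncomputable def wFun (N : ℕ) (p : ℝ) (f' : ℝ → ℝ) (r : ℝ) : ℝ := rho N r * gFun p f' r

/-- the derivative `w'(r;a) = ρ'(r) g(r;a) + ρ(r) g'(r;a)`, where `g' = -F'`. -/
noncomputable def wDeriv (N : ℕ) (p : ℝ) (f' F' : ℝ → ℝ) (r : ℝ) : ℝ :=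
  rho' N r * gFun p f' r - rho N r * F' r

/-- The solution with parameter `a` is positive on `[0,∞)` and decays like
`c r^{-(N-1)/(p-1)} e^{-r/(p-1)}` as `r → ∞` for some `c > 0`. -/
def HasFastDecay (N : ℕ) (p a : ℝ) : Prop :=
  ∃ f f' F' : ℝ → ℝ, IsProfileSol N p a f f' F' ∧
    (∀ r, 0 ≤ r → 0 < f r) ∧
    ∃ c, 0 < c ∧
      Filter.Tendsto (fun r => f r * r ^ (((N : ℝ) - 1) / (p - 1)) * Real.exp (r / (p - 1)))
        Filter.atTop (nhds c)

open scoped Topology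

/-! ### The system for positive profiles -/

/-- The first-order system satisfied on `(0,∞)` by a positive profile `f` and `g = |f'|^{p-1}`,
with `m = 1/(p-1)`: `f' = -g^m`, `g' = f - (1 + (N-1)/r) g`. The conditions at the origin are
one-sided limits: `f(0+) = a` and `g(r) = O(r)`. -/
structure PosSol (N : ℕ) (m a : ℝ) (f g : ℝ → ℝ) : Prop where
  f_pos : ∀ r, 0 < r → 0 < f r
  g_pos : ∀ r, 0 < r → 0 < g r
  f_deriv : ∀ r, 0 < r → HasDerivAt f (-(g r ^ m)) r
  g_deriv : ∀ r, 0 < r → HasDerivAt g (f r - (1 + ((N : ℝ) - 1) / r) * g r) r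
  f_lim : Tendsto f (𝓝[>] 0) (𝓝 a)
  g_bound : ∃ C, ∀ᶠ r in 𝓝[>] (0 : ℝ), g r ≤ C * r

/-! ### Elementary facts on `(0,∞)` and the weight `ρ` -/

theorem pos_of_deriv_pos {u u' : ℝ → ℝ} {b : ℝ}
    (hd : ∀ r, 0 < r → r ≤ b → HasDerivAt u (u' r) r)
    (hpos : ∀ r, 0 < r → r < b → 0 < u' r)
    (hlim : Tendsto u (𝓝[>] 0) (𝓝 0)) {r : ℝ} (hr : 0 < r) (hrb : r ≤ b) : 0 < u r := by
  have hmono : StrictMonoOn u (Ioc 0 b) := by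
    apply strictMonoOn_of_deriv_pos (convex_Ioc 0 b)
    · intro x hx
      exact (hd x hx.1 hx.2).continuousAt.continuousWithinAt
    · intro x hx
      rw [interior_Ioc] at hx
      rw [(hd x hx.1 hx.2.le).deriv]
      exact hpos x hx.1 hx.2
  have h1 : 0 ≤ u (r / 2) := by
    refine le_of_tendsto hlim ?_
    filter_upwards [Ioo_mem_nhdsGT (show (0 : ℝ) < r / 2 by positivity)] with x hx
    exact (hmono ⟨hx.1, by linarith [hx.2]⟩ ⟨by positivity, by linarith⟩ hx.2).le
  exact h1.trans_lt (hmono ⟨by positivity, by linarith⟩ ⟨hr, hrb⟩ (by linarith))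

/-- The interval `(0,δ]` keeps the first zero away from `0`, where `u` need not be continuous. -/
theorem exists_first_zero {u : ℝ → ℝ} {δ t : ℝ} (hδ : 0 < δ)
    (hc : ContinuousOn u (Ici δ)) (hpos : ∀ r, 0 < r → r ≤ δ → 0 < u r)
    (ht : 0 < t) (hut : u t ≤ 0) :
    ∃ R, 0 < R ∧ u R = 0 ∧ ∀ r, 0 < r → r < R → 0 < u r := by
  have hδt : δ < t := by
    by_contra h
    exact absurd (hpos t ht (not_lt.mp h)) (not_lt.mpr hut)
  have hcs : ContinuousOn u (Icc δ t) := hc.mono Icc_subset_Ici_self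
  have hcomp : IsCompact (Icc δ t ∩ u ⁻¹' Iic 0) :=
    isCompact_Icc.of_isClosed_subset
      (hcs.preimage_isClosed_of_isClosed isClosed_Icc isClosed_Iic) inter_subset_left
  obtain ⟨R, ⟨⟨hR1, hR2⟩, hR3⟩, hleast⟩ :=
    hcomp.exists_isLeast ⟨t, ⟨hδt.le, le_rfl⟩, hut⟩
  have hbefore : ∀ r, 0 < r → r < R → 0 < u r := by
    intro r hr hrR
    by_cases hrδ : r ≤ δ
    · exact hpos r hr hrδ
    · by_contra hneg
      have := hleast ⟨⟨(not_le.mp hrδ).le, hrR.le.trans hR2⟩, not_lt.mp hneg⟩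
      linarith
  have hδR : δ < R := lt_of_le_of_ne hR1 (by
    rintro rfl
    exact absurd (hpos δ hδ le_rfl) (not_lt.mpr hR3))
  refine ⟨R, by linarith, le_antisymm hR3 ?_, hbefore⟩
  have hcR : Tendsto u (𝓝[<] R) (𝓝 (u R)) :=
    ((hc.continuousAt (Ici_mem_nhds hδR)).tendsto).mono_left nhdsWithin_le_nhds
  refine ge_of_tendsto hcR ?_
  filter_upwards [Ioo_mem_nhdsLT hδR] with x hx
  exact (hbefore x (hδ.trans hx.1) hx.2).le

theorem hasDerivAt_rho {N : ℕ} (hN : 2 ≤ N) {r : ℝ} (hr : 0 < r) :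
    HasDerivAt (rho N) ((1 + ((N : ℝ) - 1) / r) * rho N r) r := by
  obtain ⟨k, rfl⟩ := Nat.exists_eq_add_of_le' hN
  have h := (hasDerivAt_pow (k + 1) r).fun_mul (Real.hasDerivAt_exp r)
  have e : rho (k + 2) = fun x : ℝ => x ^ (k + 1) * Real.exp x := by
    funext x; simp [rho]
  rw [e]
  refine h.congr_deriv ?_
  push_cast
  field_simp
  ring

theorem rho_pos (N : ℕ) {r : ℝ} (hr : 0 < r) : 0 < rho N r := by
  unfold rho; positivity

theorem tendsto_rho_zero {N : ℕ} (hN : 2 ≤ N) : Tendsto (rho N) (𝓝[>] 0) (𝓝 0) := by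
  have h : Continuous (rho N) := by unfold rho; fun_prop
  have h0 : rho N 0 = 0 := by
    simp [rho, show N - 1 ≠ 0 by omega]
  have := h.tendsto 0
  rw [h0] at this
  exact this.mono_left nhdsWithin_le_nhds

/-! ### The Pohozaev energy -/

/-- The energy divided by `ρ^θ`: with `h = 1 + (N-1)/r`, it is
`f²/2 - (θ/2) h g f + (θ/4)((θ-1)h² + h') g² + g^{m+1}/(m+1)`. -/
noncomputable def energyDensity (N : ℕ) (m θ : ℝ) (f g : ℝ → ℝ) (r : ℝ) : ℝ :=
  f r ^ 2 / 2 - θ / 2 * (1 + ((N : ℝ) - 1) / r) * g r * f r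
    + θ / 4 * ((θ - 1) * (1 + ((N : ℝ) - 1) / r) ^ 2 - ((N : ℝ) - 1) / r ^ 2) * g r ^ 2
    + g r ^ (m + 1) / (m + 1)

/-- The Pohozaev energy `J = A w_s²/2 - A_s w w_s/2 + A_ss w²/4 + A q w^{m+1}/(m+1)`, where
`ds = ρ dr`, `w = ρ g`, `w_s = f`, `A = ρ^θ` and `q = ρ^{-(m+1)}`, as a function of `r`. -/
noncomputable def energy (N : ℕ) (m θ : ℝ) (f g : ℝ → ℝ) (r : ℝ) : ℝ :=
  rho N r ^ θ * energyDensity N m θ f g r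

/-- `A_sss = θ ρ^{θ-3} · energyRate` for `A = ρ^θ` and `ds = ρ dr`; in terms of
`h = 1 + (N-1)/r` the factor is `(θ-2)((θ-1)h² + h')h + 2(θ-1)hh' + h''`. -/
noncomputable def energyRate (N : ℕ) (θ r : ℝ) : ℝ :=
  (θ - 2) * ((θ - 1) * (1 + ((N : ℝ) - 1) / r) ^ 2 - ((N : ℝ) - 1) / r ^ 2)
      * (1 + ((N : ℝ) - 1) / r)
    - 2 * (θ - 1) * (1 + ((N : ℝ) - 1) / r) * (((N : ℝ) - 1) / r ^ 2)
    + 2 * ((N : ℝ) - 1) / r ^ 3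

/-- The identity `J_s = A_sss w²/4`, written in the variable `r`. The hypothesis on `θ` is what makes
the terms in `g^{m+1}` cancel. -/
theorem hasDerivAt_energy {N : ℕ} (hN : 2 ≤ N) {m θ a : ℝ} (hm : 1 < m)
    (hθ : θ * (m + 3) = 2 * (m + 1)) {f g : ℝ → ℝ} (S : PosSol N m a f g) {r : ℝ} (hr : 0 < r) :
    HasDerivAt (energy N m θ f g) (θ / 4 * rho N r ^ θ * energyRate N θ r * g r ^ 2) r := by
  have hρ := rho_pos N hr
  have hg := S.g_pos r hr
  have dρ : HasDerivAt (fun x => rho N x ^ θ)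
      (θ * (1 + ((N : ℝ) - 1) / r) * rho N r ^ θ) r := by
    convert (hasDerivAt_rho hN hr).rpow_const (p := θ) (Or.inl hρ.ne') using 1
    rw [Real.rpow_sub_one hρ.ne']
    field_simp
  have dh : HasDerivAt (fun x : ℝ => 1 + ((N : ℝ) - 1) / x) (-(((N : ℝ) - 1) / r ^ 2)) r := by
    refine (((hasDerivAt_inv hr.ne').const_mul ((N : ℝ) - 1)).const_add 1).congr_deriv ?_
    field_simp
  have dh2 : HasDerivAt (fun x : ℝ => ((N : ℝ) - 1) / x ^ 2) (-(2 * ((N : ℝ) - 1) / r ^ 3)) r := by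
    refine (((hasDerivAt_pow 2 r).fun_inv (pow_ne_zero 2 hr.ne')).const_mul
      ((N : ℝ) - 1)).congr_deriv ?_
    push_cast
    field_simp
  have df := S.f_deriv r hr
  have dg := S.g_deriv r hr
  have dgp : HasDerivAt (fun x => g x ^ (m + 1) / (m + 1))
      (g r ^ m * (f r - (1 + ((N : ℝ) - 1) / r) * g r)) r := by
    refine ((dg.rpow_const (p := m + 1) (Or.inl hg.ne')).div_const (m + 1)).congr_deriv ?_
    rw [add_sub_cancel_right]
    have : m + 1 ≠ 0 := by linarith
    field_simp
  have hgm : g r ^ (m + 1) = g r ^ m * g r := Real.rpow_add_one hg.ne' m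
  have dQ := ((((df.fun_pow 2).div_const 2).fun_sub
    (((dh.const_mul (θ / 2)).fun_mul dg).fun_mul df)).fun_add
    (((((dh.fun_pow 2).const_mul (θ - 1)).fun_sub dh2).const_mul (θ / 4)).fun_mul
      (dg.fun_pow 2))).fun_add dgp
  have := dρ.fun_mul dQ
  refine this.congr_deriv ?_
  rw [hgm]
  generalize g r ^ m = G
  generalize rho N r ^ θ = A
  have hm1 : m + 1 ≠ 0 := by linarith
  have hm3 : m + 3 ≠ 0 := by linarith
  have hθ' : θ = 2 * (m + 1) / (m + 3) := by field_simp; linarith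
  unfold energyRate
  have key : θ / (m + 1) + θ / 2 - 1 = 0 := by
    rw [hθ']; field_simp; ring
  have e : ∀ y : ℝ, G * y / (m + 1) = G * y * (1 / (m + 1)) := fun y => by ring
  push_cast
  rw [e]
  have key2 : θ * (1 / (m + 1)) = 1 - θ / 2 := by
    linarith [key, show θ * (1 / (m + 1)) = θ / (m + 1) by ring]
  rw [show (2:ℝ) * ((N:ℝ) - 1) / r ^ 3 = 2 * (((N:ℝ) - 1) / r ^ 3) by ring]
  linear_combination (1 + ((N : ℝ) - 1) / r) * A * (G * g r) * key2

/-- Bound serving at both ends of `(0,∞)`: with `b = 1` near the origin and `b = 1/ρ(r)` at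
infinity. -/
theorem abs_energyDensity_le {N : ℕ} (hN : 2 ≤ N) {m θ C b r : ℝ} (hm : 1 < m) (hθ1 : 1 < θ)
    (hθ2 : θ < 2) {f g : ℝ → ℝ} (hr : 0 < r) (hb : 0 ≤ b) (hb1 : b ≤ 1) (hC : 0 ≤ C)
    (hf0 : 0 ≤ f r) (hg0 : 0 < g r) (hf : f r ≤ C * b) (hg : g r ≤ C * b)
    (hgr : g r ≤ C * b * r) :
    |energyDensity N m θ f g r| ≤ C ^ 2 * (1 + 2 * N + N ^ 2 + C ^ (m - 1)) * b ^ 2 := by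
  have hn : (0 : ℝ) ≤ (N : ℝ) - 1 := by
    have : (2 : ℝ) ≤ N := by exact_mod_cast hN
    linarith
  have hgr' : g r / r ≤ C * b := by rwa [div_le_iff₀ hr]
  have hgr0 : 0 ≤ g r / r := by positivity
  have hCb : 0 ≤ C * b := by positivity
  -- `y = h g` and `z = -h' g²` are the combinations in which the density is bounded.
  set y := g r + ((N : ℝ) - 1) * (g r / r) with hy
  set z := ((N : ℝ) - 1) * (g r / r) ^ 2 with hz
  have hy0 : 0 ≤ y := by positivity
  have hz0 : 0 ≤ z := by positivity
  have hyle : y ≤ N * (C * b) := by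
    have := mul_le_mul_of_nonneg_left hgr' hn
    linarith
  have hzle : z ≤ N * (C * b) ^ 2 := by
    have h1 : (g r / r) ^ 2 ≤ (C * b) ^ 2 := pow_le_pow_left₀ hgr0 hgr' 2
    have h2 := mul_le_mul_of_nonneg_left h1 hn
    have h3 := sq_nonneg (C * b)
    linarith
  have hgp0 : 0 ≤ g r ^ (m + 1) := by positivity
  have hgp : g r ^ (m + 1) ≤ C ^ (m - 1) * (C * b) ^ 2 := by
    have e : g r ^ (m + 1) = g r ^ (m - 1) * g r ^ 2 := by
      rw [← Real.rpow_natCast, ← Real.rpow_add hg0]; norm_num; ring_nf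
    have hgC : g r ≤ C := hg.trans (by nlinarith)
    rw [e]
    gcongr
  have e : energyDensity N m θ f g r = f r ^ 2 / 2 - θ / 2 * y * f r
      + θ / 4 * ((θ - 1) * y ^ 2 - z) + g r ^ (m + 1) / (m + 1) := by
    rw [hy, hz]; unfold energyDensity; field_simp
  have h1 : f r ^ 2 ≤ (C * b) ^ 2 := pow_le_pow_left₀ hf0 hf 2
  have h2 : y * f r ≤ N * (C * b) * (C * b) := by gcongr
  have h3 : y ^ 2 ≤ (N * (C * b)) ^ 2 := by gcongr
  have h4 : g r ^ (m + 1) / (m + 1) ≤ g r ^ (m + 1) := div_le_self hgp0 (by linarith)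
  have h5 : 0 ≤ g r ^ (m + 1) / (m + 1) := by positivity
  have h6 : 0 ≤ y * f r := by positivity
  have h7 : θ / 2 * (y * f r) ≤ y * f r := mul_le_of_le_one_left h6 (by linarith)
  have h7' : 0 ≤ θ / 2 * (y * f r) := by positivity
  have h8 : θ / 4 * (θ - 1) * y ^ 2 ≤ y ^ 2 :=
    mul_le_of_le_one_left (by positivity) (by nlinarith)
  have h8' : 0 ≤ θ / 4 * (θ - 1) * y ^ 2 :=
    mul_nonneg (mul_nonneg (by positivity) (by linarith)) (by positivity)
  have h9 : θ / 4 * z ≤ z := mul_le_of_le_one_left hz0 (by linarith)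
  have h9' : 0 ≤ θ / 4 * z := by positivity
  have h10 := sq_nonneg (f r)
  have h11 := sq_nonneg y
  have tot : f r ^ 2 + y * f r + y ^ 2 + z + g r ^ (m + 1) ≤
      C ^ 2 * (1 + 2 * N + N ^ 2 + C ^ (m - 1)) * b ^ 2 := by
    have : C ^ 2 * (1 + 2 * N + N ^ 2 + C ^ (m - 1)) * b ^ 2 = (C * b) ^ 2 + N * (C * b) * (C * b)
      + (N * (C * b)) ^ 2 + N * (C * b) ^ 2 + C ^ (m - 1) * (C * b) ^ 2 := by ring
    linarith
  rw [e, abs_le]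
  constructor <;> linarith

theorem tendsto_energy_zero {N : ℕ} (hN : 2 ≤ N) {m θ a : ℝ} (hm : 1 < m) (hθ1 : 1 < θ)
    (hθ2 : θ < 2) {f g : ℝ → ℝ} (S : PosSol N m a f g) :
    Tendsto (energy N m θ f g) (𝓝[>] 0) (𝓝 0) := by
  obtain ⟨C₀, hC₀⟩ := S.g_bound
  set C := max C₀ (|a| + 1) with hCdef
  have hC : 0 ≤ C := le_max_of_le_right (by positivity)
  have hfle : ∀ᶠ r in 𝓝[>] (0 : ℝ), f r < |a| + 1 :=
    S.f_lim.eventually_lt_const (by linarith [le_abs_self a])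
  have hlim : Tendsto (fun r => rho N r ^ θ * (C ^ 2 * (1 + 2 * N + N ^ 2 + C ^ (m - 1))))
      (𝓝[>] 0) (𝓝 0) := by
    have h := (tendsto_rho_zero hN).rpow_const (p := θ) (Or.inr (by linarith))
    rw [Real.zero_rpow (by linarith)] at h
    simpa using h.mul_const (C ^ 2 * (1 + 2 * (N : ℝ) + (N : ℝ) ^ 2 + C ^ (m - 1)))
  refine squeeze_zero_norm' ?_ hlim
  filter_upwards [hC₀, hfle, Ioo_mem_nhdsGT (zero_lt_one' ℝ)] with r h1 h2 hr
  have hρ := rho_pos N hr.1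
  have hgr : g r ≤ C * 1 * r := by
    rw [mul_one]
    exact h1.trans (mul_le_mul_of_nonneg_right (le_max_left _ _) hr.1.le)
  have hb := abs_energyDensity_le hN hm hθ1 hθ2 (f := f) (g := g) hr.1 zero_le_one le_rfl hC
    (S.f_pos r hr.1).le (S.g_pos r hr.1) (by rw [mul_one]; exact h2.le.trans (le_max_right _ _))
    (hgr.trans (by nlinarith [hr.2])) hgr
  rw [Real.norm_eq_abs, energy, abs_mul, abs_of_pos (Real.rpow_pos_of_pos hρ θ)]
  rw [one_pow, mul_one] at hb
  gcongr

theorem exp_le_rho (N : ℕ) {r : ℝ} (hr : 1 ≤ r) : Real.exp r ≤ rho N r := by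
  unfold rho
  exact le_mul_of_one_le_left (Real.exp_pos r).le (one_le_pow₀ hr)

/-- `f` and `g` are `O(1/ρ)` at infinity; for positive solutions this is the form in which fast
decay is used. -/
def RhoBounded (N : ℕ) (f g : ℝ → ℝ) : Prop :=
  ∃ C, ∀ᶠ r in atTop, f r * rho N r ≤ C ∧ g r * rho N r ≤ C

theorem tendsto_energy_top {N : ℕ} (hN : 2 ≤ N) {m θ a : ℝ} (hm : 1 < m) (hθ1 : 1 < θ)
    (hθ2 : θ < 2) {f g : ℝ → ℝ} (S : PosSol N m a f g) (hB : RhoBounded N f g) :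
    Tendsto (energy N m θ f g) atTop (𝓝 0) := by
  obtain ⟨C₀, hC₀⟩ := hB
  set C := max C₀ 0 with hCdef
  have hC : 0 ≤ C := le_max_right _ _
  have hρtop : Tendsto (rho N) atTop atTop :=
    tendsto_atTop_mono' atTop
      ((eventually_ge_atTop 1).mono fun r hr => exp_le_rho N hr) Real.tendsto_exp_atTop
  have hlim : Tendsto (fun r => (C ^ 2 * (1 + 2 * N + N ^ 2 + C ^ (m - 1))) *
      rho N r ^ (-(2 - θ))) atTop (𝓝 0) := by
    have h := (tendsto_rpow_neg_atTop (show 0 < 2 - θ by linarith)).comp hρtop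
    simpa using h.const_mul (C ^ 2 * (1 + 2 * (N : ℝ) + (N : ℝ) ^ 2 + C ^ (m - 1)))
  refine squeeze_zero_norm' ?_ hlim
  filter_upwards [hC₀, eventually_ge_atTop 1] with r h1 hr
  have hr0 : 0 < r := by linarith
  have hρ := rho_pos N hr0
  have hρ1 : 1 ≤ rho N r := (Real.one_le_exp hr0.le).trans (exp_le_rho N hr)
  have hf : f r ≤ C * (rho N r)⁻¹ := by
    rw [← div_eq_mul_inv, le_div_iff₀ hρ]
    exact h1.1.trans (le_max_left _ _)
  have hg : g r ≤ C * (rho N r)⁻¹ := by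
    rw [← div_eq_mul_inv, le_div_iff₀ hρ]
    exact h1.2.trans (le_max_left _ _)
  have hb := abs_energyDensity_le hN hm hθ1 hθ2 (f := f) (g := g) hr0 (b := (rho N r)⁻¹)
    (by positivity) (inv_le_one_of_one_le₀ hρ1) hC
    (S.f_pos r hr0).le (S.g_pos r hr0) hf hg (hg.trans (le_mul_of_one_le_right (by positivity) hr))
  rw [Real.norm_eq_abs, energy, abs_mul, abs_of_pos (Real.rpow_pos_of_pos hρ θ)]
  have e : rho N r ^ (-(2 - θ)) = rho N r ^ θ * (rho N r)⁻¹ ^ 2 := by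
    rw [show -(2 - θ) = θ + (-2 : ℝ) by ring, Real.rpow_add hρ, Real.rpow_neg hρ.le,
      Real.rpow_two, inv_pow]
  rw [e]
  calc _ ≤ rho N r ^ θ * (C ^ 2 * (1 + 2 * N + N ^ 2 + C ^ (m - 1)) * (rho N r)⁻¹ ^ 2) := by gcongr
    _ = _ := by ring

/-- Subcriticality makes the sign of `A_sss` change at most once along `(0,∞)`, from positive to
negative. -/
theorem energyRate_pos_of_lt {N : ℕ} (hN : 2 ≤ N) {m θ : ℝ} (hm : 1 < m)
    (hθ : θ * (m + 3) = 2 * (m + 1)) (hsub : m * ((N : ℝ) - 2) < N + 2)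
    (hθ1 : 1 < θ) (hθ2 : θ < 2) {s r : ℝ} (hs : 0 < s) (hsr : s < r)
    (h : 0 ≤ energyRate N θ r) : 0 < energyRate N θ s := by
  have hn : (0 : ℝ) < (N : ℝ) - 1 := by
    have : (2 : ℝ) ≤ N := by exact_mod_cast hN
    linarith
  have hr : 0 < r := hs.trans hsr
  set n := (N : ℝ) - 1 with hndef
  -- Multiplied by `x²`, the rate is `c₃/x - c₂ - c₁ x - c₀ x²` with `c₀, c₁, c₃ > 0`, hence decreasing
  -- whatever the sign of `c₂`.
  have formula : ∀ x : ℝ, 0 < x → x ^ 2 * energyRate N θ x =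
      n * ((2 - θ) * n + 2) * (1 - (θ - 1) * n) * x⁻¹ - (3 * n ^ 2 * (2 - θ) * (θ - 1) + (3 * θ - 4) * n)
        - 3 * n * (2 - θ) * (θ - 1) * x - (2 - θ) * (θ - 1) * x ^ 2 := by
    intro x hx
    unfold energyRate
    rw [← hndef]
    field_simp
    ring
  -- Positivity of `c₃` is exactly the subcriticality condition.
  have hlead : 0 < 1 - (θ - 1) * n := by
    have h1 : (1 - (θ - 1) * n) * (m + 3) = N + 2 - m * ((N : ℝ) - 2) := by
      rw [hndef]
      linear_combination (-(N : ℝ) + 1) * hθ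
    by_contra hneg
    have := mul_nonpos_of_nonpos_of_nonneg (not_lt.mp hneg) (show 0 ≤ m + 3 by linarith)
    linarith
  have hinv : r⁻¹ < s⁻¹ := by gcongr
  have hk : 0 < (2 - θ) * (θ - 1) := mul_pos (by linarith) (by linarith)
  have hc3 : 0 < n * ((2 - θ) * n + 2) * (1 - (θ - 1) * n) := by
    have : 0 < 2 - θ := by linarith
    positivity
  have h1 := mul_lt_mul_of_pos_left hinv hc3
  have h2 := mul_lt_mul_of_pos_left hsr (show 0 < 3 * n * ((2 - θ) * (θ - 1)) by positivity)
  have h3 := mul_lt_mul_of_pos_left (show s ^ 2 < r ^ 2 by gcongr) hk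
  have h4 : 0 ≤ r ^ 2 * energyRate N θ r := by positivity
  have h5 : 0 < s ^ 2 * energyRate N θ s := by
    have f1 := formula r hr
    have f2 := formula s hs
    linarith
  exact pos_of_mul_pos_right h5 (by positivity)

/-- Where the rate is nonnegative, the energy has only increased from its limit `0` at the origin;
where it is negative, the energy decreases from there on to its limit `0` at infinity. -/
theorem energy_pos {N : ℕ} (hN : 2 ≤ N) {m θ a : ℝ} (hm : 1 < m)
    (hθ : θ * (m + 3) = 2 * (m + 1)) (hsub : m * ((N : ℝ) - 2) < N + 2)
    (hθ1 : 1 < θ) (hθ2 : θ < 2) {f g : ℝ → ℝ} (S : PosSol N m a f g) (hB : RhoBounded N f g)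
    {r : ℝ} (hr : 0 < r) : 0 < energy N m θ f g r := by
  have hcoef : ∀ x, 0 < x → 0 < θ / 4 * rho N x ^ θ := fun x hx => by
    have := rho_pos N hx
    positivity
  rcases le_or_gt 0 (energyRate N θ r) with h | h
  · refine pos_of_deriv_pos (b := r) (fun x hx _ => hasDerivAt_energy hN hm hθ S hx) ?_
      (tendsto_energy_zero hN hm hθ1 hθ2 S) hr le_rfl
    intro x hx hxr
    have h1 := energyRate_pos_of_lt hN hm hθ hsub hθ1 hθ2 hx hxr h
    have h2 := hcoef x hx
    have h3 := S.g_pos x hx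
    positivity
  · have hanti : StrictAntiOn (energy N m θ f g) (Ici r) := by
      apply strictAntiOn_of_deriv_neg (convex_Ici r)
      · intro x hx
        exact (hasDerivAt_energy hN hm hθ S (hr.trans_le hx)).continuousAt.continuousWithinAt
      · intro x hx
        rw [interior_Ici] at hx
        have hx0 : 0 < x := hr.trans hx
        rw [(hasDerivAt_energy hN hm hθ S hx0).deriv]
        have h1 : energyRate N θ x < 0 := by
          by_contra hneg
          have := energyRate_pos_of_lt hN hm hθ hsub hθ1 hθ2 hr hx (not_lt.mp hneg)
          linarith
        have h3 := S.g_pos x hx0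
        exact mul_neg_of_neg_of_pos (mul_neg_of_pos_of_neg (hcoef x hx0) h1) (by positivity)
    have h1 : 0 ≤ energy N m θ f g (r + 1) := by
      refine le_of_tendsto (tendsto_energy_top hN hm hθ1 hθ2 S hB) ?_
      filter_upwards [eventually_ge_atTop (r + 1)] with x hx
      exact hanti.antitoneOn (show r ≤ r + 1 by linarith) (show r ≤ x by linarith) hx
    exact h1.trans_lt (hanti (show r ≤ r from le_rfl) (show r ≤ r + 1 by linarith) (by linarith))

/-! ### Comparison of two positive solutions -/

theorem hasDerivAt_rho_mul {N : ℕ} (hN : 2 ≤ N) {m a : ℝ} {f g : ℝ → ℝ} (S : PosSol N m a f g)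
    {r : ℝ} (hr : 0 < r) : HasDerivAt (fun x => rho N x * g x) (rho N r * f r) r := by
  refine ((hasDerivAt_rho hN hr).fun_mul (S.g_deriv r hr)).congr_deriv ?_
  ring

theorem tendsto_g_zero {N : ℕ} {m a : ℝ} {f g : ℝ → ℝ} (S : PosSol N m a f g) :
    Tendsto g (𝓝[>] 0) (𝓝 0) := by
  obtain ⟨C, hC⟩ := S.g_bound
  have hlim : Tendsto (fun r : ℝ => C * r) (𝓝[>] 0) (𝓝 0) := by
    have : Continuous fun r : ℝ => C * r := by fun_prop
    simpa using (this.tendsto 0).mono_left (nhdsWithin_le_nhds (s := Ioi 0))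
  refine squeeze_zero' ?_ hC hlim
  filter_upwards [self_mem_nhdsWithin] with r hr
  exact (S.g_pos r hr).le

/-- A linear comparison of `f₁` and `f₂` passes to `g₁` and `g₂`, since `(ρ gᵢ)' = ρ fᵢ`. -/
theorem g_lt_g_near_zero {N : ℕ} (hN : 2 ≤ N) {m a₁ a₂ : ℝ} {f₁ g₁ f₂ g₂ : ℝ → ℝ}
    (S₁ : PosSol N m a₁ f₁ g₁) (S₂ : PosSol N m a₂ f₂ g₂) {A B δ : ℝ}
    (hlt : ∀ r, 0 < r → r < δ → A * f₁ r < B * f₂ r) {r : ℝ} (hr : 0 < r) (hrδ : r ≤ δ) :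
    A * g₁ r < B * g₂ r := by
  have hlim : Tendsto (fun x => B * (rho N x * g₂ x) - A * (rho N x * g₁ x)) (𝓝[>] 0) (𝓝 0) := by
    have h1 := ((tendsto_rho_zero hN).mul (tendsto_g_zero S₁)).const_mul A
    have h2 := ((tendsto_rho_zero hN).mul (tendsto_g_zero S₂)).const_mul B
    simpa using h2.sub h1
  have key := pos_of_deriv_pos (b := δ)
    (fun x hx _ => ((hasDerivAt_rho_mul hN S₂ hx).const_mul B).fun_sub
      ((hasDerivAt_rho_mul hN S₁ hx).const_mul A))
    (fun x hx hxδ => by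
      have h1 := mul_lt_mul_of_pos_left (hlt x hx hxδ) (rho_pos N hx)
      linarith) hlim hr hrδ
  have h2 : 0 < rho N r * (B * g₂ r - A * g₁ r) := by linarith
  have := pos_of_mul_pos_right h2 (rho_pos N hr).le
  linarith

theorem exists_Ioo_of_eventually {P : ℝ → Prop} (h : ∀ᶠ r in 𝓝[>] (0 : ℝ), P r) :
    ∃ δ, 0 < δ ∧ ∀ r, 0 < r → r < δ → P r := by
  obtain ⟨δ, hδ, hsub⟩ := mem_nhdsGT_iff_exists_Ioo_subset.mp h
  exact ⟨δ, hδ, fun r h1 h2 => hsub ⟨h1, h2⟩⟩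

/-- The quantity `D = J₂ - σ² J₁` with `σ = g₂/g₁`. -/
noncomputable def ratioGap (N : ℕ) (m θ : ℝ) (f₁ g₁ f₂ g₂ : ℝ → ℝ) (r : ℝ) : ℝ :=
  energy N m θ f₂ g₂ r - (g₂ r / g₁ r) ^ 2 * energy N m θ f₁ g₁ r

theorem hasDerivAt_ratio {N : ℕ} {m a₁ a₂ : ℝ} {f₁ g₁ f₂ g₂ : ℝ → ℝ}
    (S₁ : PosSol N m a₁ f₁ g₁) (S₂ : PosSol N m a₂ f₂ g₂) {r : ℝ} (hr : 0 < r) :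
    HasDerivAt (fun x => g₂ x / g₁ x) (-((f₁ r * g₂ r - f₂ r * g₁ r) / g₁ r ^ 2)) r := by
  have hg := (S₁.g_pos r hr).ne'
  refine ((S₂.g_deriv r hr).fun_div (S₁.g_deriv r hr) hg).congr_deriv ?_
  field_simp
  ring

/-- `D' = -2 σ σ' J₁`: the contributions of `A_sss` to `J₂'` and `σ² J₁'` are equal. -/
theorem hasDerivAt_ratioGap {N : ℕ} (hN : 2 ≤ N) {m θ a₁ a₂ : ℝ} (hm : 1 < m)
    (hθ : θ * (m + 3) = 2 * (m + 1)) {f₁ g₁ f₂ g₂ : ℝ → ℝ}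
    (S₁ : PosSol N m a₁ f₁ g₁) (S₂ : PosSol N m a₂ f₂ g₂) {r : ℝ} (hr : 0 < r) :
    HasDerivAt (ratioGap N m θ f₁ g₁ f₂ g₂)
      (2 * (g₂ r / g₁ r) * ((f₁ r * g₂ r - f₂ r * g₁ r) / g₁ r ^ 2) * energy N m θ f₁ g₁ r) r := by
  have hg := (S₁.g_pos r hr).ne'
  refine ((hasDerivAt_energy hN hm hθ S₂ hr).fun_sub
    (((hasDerivAt_ratio S₁ S₂ hr).fun_pow 2).fun_mul
      (hasDerivAt_energy hN hm hθ S₁ hr))).congr_deriv ?_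
  push_cast
  field_simp
  ring

theorem hasDerivAt_rho_wronskian {N : ℕ} (hN : 2 ≤ N) {m a₁ a₂ : ℝ} {f₁ g₁ f₂ g₂ : ℝ → ℝ}
    (S₁ : PosSol N m a₁ f₁ g₁) (S₂ : PosSol N m a₂ f₂ g₂) {r : ℝ} (hr : 0 < r) :
    HasDerivAt (fun x => rho N x * (f₁ x * g₂ x - f₂ x * g₁ x))
      (rho N r * (g₁ r * g₂ r * (g₂ r ^ (m - 1) - g₁ r ^ (m - 1)))) r := by
  have h1 := S₁.g_pos r hr
  have h2 := S₂.g_pos r hr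
  refine ((hasDerivAt_rho hN hr).fun_mul
    (((S₁.f_deriv r hr).fun_mul (S₂.g_deriv r hr)).fun_sub
      ((S₂.f_deriv r hr).fun_mul (S₁.g_deriv r hr)))).congr_deriv ?_
  rw [Real.rpow_sub_one h1.ne', Real.rpow_sub_one h2.ne']
  field_simp
  ring

/-- The Wronskian `V = f₁ g₂ - f₂ g₁` is positive as long as `g₂ > g₁`, up to and including the
endpoint. -/
theorem wronskian_near_zero {N : ℕ} (hN : 2 ≤ N) {m a₁ a₂ : ℝ} (hm : 1 < m) {f₁ g₁ f₂ g₂ : ℝ → ℝ}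
    (S₁ : PosSol N m a₁ f₁ g₁) (S₂ : PosSol N m a₂ f₂ g₂) {b : ℝ}
    (hlt : ∀ r, 0 < r → r < b → g₁ r < g₂ r) {r : ℝ} (hr : 0 < r) (hrb : r ≤ b) :
    0 < f₁ r * g₂ r - f₂ r * g₁ r := by
  have hlim : Tendsto (fun x => rho N x * (f₁ x * g₂ x - f₂ x * g₁ x)) (𝓝[>] 0) (𝓝 0) := by
    have h := (tendsto_rho_zero hN).mul
      ((S₁.f_lim.mul (tendsto_g_zero S₂)).sub (S₂.f_lim.mul (tendsto_g_zero S₁)))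
    simpa using h
  have key := pos_of_deriv_pos (b := b) (fun x hx _ => hasDerivAt_rho_wronskian hN S₁ S₂ hx)
    (fun x hx hxb => by
      have h0 := rho_pos N hx
      have h1 := S₁.g_pos x hx
      have h2 := S₂.g_pos x hx
      have h3 := Real.rpow_lt_rpow h1.le (hlt x hx hxb) (show 0 < m - 1 by linarith)
      have h4 : 0 < g₂ x ^ (m - 1) - g₁ x ^ (m - 1) := by linarith
      positivity) hlim hr hrb
  exact pos_of_mul_pos_right key (rho_pos N hr).le

theorem tendsto_ratioGap_zero {N : ℕ} (hN : 2 ≤ N) {m θ a₁ a₂ : ℝ} (hm : 1 < m) (hθ1 : 1 < θ)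
    (hθ2 : θ < 2) (ha₁ : 0 < a₁) {f₁ g₁ f₂ g₂ : ℝ → ℝ}
    (S₁ : PosSol N m a₁ f₁ g₁) (S₂ : PosSol N m a₂ f₂ g₂) :
    Tendsto (ratioGap N m θ f₁ g₁ f₂ g₂) (𝓝[>] 0) (𝓝 0) := by
  have ev1 : ∀ᶠ r in 𝓝[>] (0 : ℝ), a₁ / 2 < f₁ r :=
    S₁.f_lim.eventually_const_lt (by linarith)
  have ev2 : ∀ᶠ r in 𝓝[>] (0 : ℝ), f₂ r < |a₂| + 1 :=
    S₂.f_lim.eventually_lt_const (by linarith [le_abs_self a₂])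
  obtain ⟨δ, hδ, hδP⟩ := exists_Ioo_of_eventually (ev1.and ev2)
  -- `σ` is bounded near the origin.
  have hg : ∀ r, 0 < r → r ≤ δ → (a₁ / 2) * g₂ r < (|a₂| + 1) * g₁ r := fun r hr hrδ =>
    g_lt_g_near_zero hN S₂ S₁ (fun x hx hxδ => by
      obtain ⟨h1, h2⟩ := hδP x hx hxδ
      calc a₁ / 2 * f₂ x < a₁ / 2 * (|a₂| + 1) := by gcongr
        _ < f₁ x * (|a₂| + 1) := by gcongr
        _ = _ := mul_comm _ _) hr hrδ
  set K := (|a₂| + 1) / (a₁ / 2) with hK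
  have hE₁ := tendsto_energy_zero hN hm hθ1 hθ2 S₁
  have hE₂ := tendsto_energy_zero hN hm hθ1 hθ2 S₂
  have hprod : Tendsto (fun r => (g₂ r / g₁ r) ^ 2 * energy N m θ f₁ g₁ r) (𝓝[>] 0) (𝓝 0) := by
    refine squeeze_zero_norm' (a := fun r => K ^ 2 * |energy N m θ f₁ g₁ r|) ?_
      (by simpa using hE₁.abs.const_mul (K ^ 2))
    filter_upwards [Ioo_mem_nhdsGT hδ] with r hr
    have h1 := S₁.g_pos r hr.1
    have h2 := S₂.g_pos r hr.1
    have h3 : g₂ r / g₁ r ≤ K := by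
      rw [hK, div_le_div_iff₀ h1 (by positivity)]
      linarith [hg r hr.1 hr.2.le]
    rw [Real.norm_eq_abs, abs_mul, abs_of_pos (show 0 < (g₂ r / g₁ r) ^ 2 by positivity)]
    gcongr
  have h := hE₂.sub hprod
  rw [sub_zero] at h
  exact h

/-- The ratio `g₂/g₁` has no critical point: if `g₁` decays fast and `a₁ < a₂`, then `V` never
vanishes. -/
theorem wronskian_pos {N : ℕ} (hN : 2 ≤ N) {m θ a₁ a₂ : ℝ} (hm : 1 < m)
    (hθ : θ * (m + 3) = 2 * (m + 1)) (hsub : m * ((N : ℝ) - 2) < N + 2)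
    (hθ1 : 1 < θ) (hθ2 : θ < 2) (ha₁ : 0 < a₁) (ha : a₁ < a₂) {f₁ g₁ f₂ g₂ : ℝ → ℝ}
    (S₁ : PosSol N m a₁ f₁ g₁) (S₂ : PosSol N m a₂ f₂ g₂) (hB : RhoBounded N f₁ g₁)
    {r : ℝ} (hr : 0 < r) : 0 < f₁ r * g₂ r - f₂ r * g₁ r := by
  by_contra hneg
  obtain ⟨δ, hδ, hδP⟩ := exists_Ioo_of_eventually (S₁.f_lim.eventually_lt S₂.f_lim ha)
  have hgδ : ∀ x, 0 < x → x ≤ δ → g₁ x < g₂ x := fun x hx hxδ => by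
    simpa using g_lt_g_near_zero (A := 1) (B := 1) hN S₁ S₂
      (fun y hy hyδ => by simpa using hδP y hy hyδ) hx hxδ
  obtain ⟨R, hR, hVR, hV⟩ := exists_first_zero (u := fun x => f₁ x * g₂ x - f₂ x * g₁ x) hδ
    (fun x hx => by
      have hx0 : 0 < x := hδ.trans_le hx
      exact (((S₁.f_deriv x hx0).continuousAt.mul (S₂.g_deriv x hx0).continuousAt).sub
        ((S₂.f_deriv x hx0).continuousAt.mul (S₁.g_deriv x hx0).continuousAt)).continuousWithinAt)
    (fun x hx hxδ => wronskian_near_zero hN hm S₁ S₂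
      (fun y hy hyδ => hgδ y hy hyδ.le) hx hxδ) hr (not_lt.mp hneg)
  have hD : 0 < ratioGap N m θ f₁ g₁ f₂ g₂ R :=
    pos_of_deriv_pos (b := R) (fun x hx _ => hasDerivAt_ratioGap hN hm hθ S₁ S₂ hx)
      (fun x hx hxR => by
        have h1 := S₁.g_pos x hx
        have h2 := S₂.g_pos x hx
        have h3 := hV x hx hxR
        have h4 := energy_pos hN hm hθ hsub hθ1 hθ2 S₁ hB hx
        positivity) (tendsto_ratioGap_zero hN hm hθ1 hθ2 ha₁ S₁ S₂) hR le_rfl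
  have hg1 := S₁.g_pos R hR
  have hg2 := S₂.g_pos R hR
  have hgR : g₁ R < g₂ R := by
    have hf : f₂ R = g₂ R / g₁ R * f₁ R := by
      field_simp
      linarith
    -- Where `V = 0`, `f₂ = σ f₁` and all terms of `D` but those in `g^{m+1}` cancel.
    have e : ratioGap N m θ f₁ g₁ f₂ g₂ R =
        rho N R ^ θ / (m + 1) * g₂ R ^ 2 * (g₂ R ^ (m - 1) - g₁ R ^ (m - 1)) := by
      have e1 : ∀ x : ℝ, 0 < x → x ^ (m + 1) = x ^ (m - 1) * x ^ 2 := fun x hx => by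
        rw [← Real.rpow_natCast, ← Real.rpow_add hx]; norm_num; ring_nf
      unfold ratioGap energy energyDensity
      rw [hf, e1 _ hg1, e1 _ hg2]
      field_simp
      ring
    rw [e] at hD
    have hρ := rho_pos N hR
    have h1 : 0 < rho N R ^ θ / (m + 1) * g₂ R ^ 2 := by
      have : 0 < m + 1 := by linarith
      positivity
    have h2 := pos_of_mul_pos_right hD h1.le
    by_contra hle
    have := Real.rpow_le_rpow hg2.le (not_lt.mp hle) (show 0 ≤ m - 1 by linarith)
    linarith
  have hanti : AntitoneOn (fun x => g₂ x / g₁ x) (Ioc 0 R) := by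
    apply antitoneOn_of_deriv_nonpos (convex_Ioc 0 R)
    · intro x hx
      exact (hasDerivAt_ratio S₁ S₂ hx.1).continuousAt.continuousWithinAt
    · intro x hx
      rw [interior_Ioc] at hx
      exact (hasDerivAt_ratio S₁ S₂ hx.1).differentiableAt.differentiableWithinAt
    · intro x hx
      rw [interior_Ioc] at hx
      rw [(hasDerivAt_ratio S₁ S₂ hx.1).deriv, neg_nonpos]
      have := hV x hx.1 hx.2
      positivity
  have hlt : ∀ x, 0 < x → x < R → g₁ x < g₂ x := fun x hx hxR => by
    have h1 := hanti ⟨hx, hxR.le⟩ ⟨hR, le_rfl⟩ hxR.le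
    have h2 : 1 < g₂ R / g₁ R := (one_lt_div hg1).mpr hgR
    exact (one_lt_div (S₁.g_pos x hx)).mp (h2.trans_le h1)
  have := wronskian_near_zero hN hm S₁ S₂ hlt hR le_rfl
  linarith

/-- There is no positive solution above a fast decaying one. -/
theorem no_larger_posSol {N : ℕ} (hN : 2 ≤ N) {m a₁ a₂ : ℝ} (hm : 1 < m)
    (hsub : m * ((N : ℝ) - 2) < N + 2)
    (ha₁ : 0 < a₁) (ha : a₁ < a₂) {f₁ g₁ f₂ g₂ : ℝ → ℝ}
    (S₁ : PosSol N m a₁ f₁ g₁) (S₂ : PosSol N m a₂ f₂ g₂) (hB : RhoBounded N f₁ g₁) : False := by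
  obtain ⟨θ, hθ⟩ : ∃ θ : ℝ, θ * (m + 3) = 2 * (m + 1) :=
    ⟨2 * (m + 1) / (m + 3), div_mul_cancel₀ _ (by linarith)⟩
  have hθ1 : 1 < θ := by nlinarith
  have hθ2 : θ < 2 := by nlinarith
  have hV := fun r (hr : 0 < r) => wronskian_pos hN hm hθ hsub hθ1 hθ2 ha₁ ha S₁ S₂ hB hr
  have hanti : AntitoneOn (fun x => g₂ x / g₁ x) (Ioi 0) := by
    apply antitoneOn_of_deriv_nonpos (convex_Ioi 0)
    · intro x hx
      exact (hasDerivAt_ratio S₁ S₂ hx).continuousAt.continuousWithinAt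
    · intro x hx
      rw [interior_Ioi] at hx
      exact (hasDerivAt_ratio S₁ S₂ hx).differentiableAt.differentiableWithinAt
    · intro x hx
      rw [interior_Ioi] at hx
      rw [(hasDerivAt_ratio S₁ S₂ hx).deriv, neg_nonpos]
      have := hV x hx
      positivity
  have hD : StrictMonoOn (ratioGap N m θ f₁ g₁ f₂ g₂) (Ioi 0) := by
    apply strictMonoOn_of_deriv_pos (convex_Ioi 0)
    · intro x hx
      exact (hasDerivAt_ratioGap hN hm hθ S₁ S₂ hx).continuousAt.continuousWithinAt
    · intro x hx
      rw [interior_Ioi] at hx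
      rw [(hasDerivAt_ratioGap hN hm hθ S₁ S₂ hx).deriv]
      have h1 := S₁.g_pos x hx
      have h2 := S₂.g_pos x hx
      have h3 := hV x hx
      have h4 := energy_pos hN hm hθ hsub hθ1 hθ2 S₁ hB hx
      positivity
  have hD1 : 0 < ratioGap N m θ f₁ g₁ f₂ g₂ 1 := by
    refine pos_of_deriv_pos (b := 1) (fun x hx _ => hasDerivAt_ratioGap hN hm hθ S₁ S₂ hx)
      (fun x hx _ => ?_) (tendsto_ratioGap_zero hN hm hθ1 hθ2 ha₁ S₁ S₂) one_pos le_rfl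
    have h1 := S₁.g_pos x hx
    have h2 := S₂.g_pos x hx
    have h3 := hV x hx
    have h4 := energy_pos hN hm hθ hsub hθ1 hθ2 S₁ hB hx
    positivity
  have hK : ∀ r, 1 ≤ r → g₂ r / g₁ r ≤ g₂ 1 / g₁ 1 := fun r hr =>
    hanti (show (0:ℝ) < 1 from one_pos) (show 0 < r by linarith) hr
  set K := g₂ 1 / g₁ 1 with hKdef
  have hK0 : 0 < K := div_pos (S₂.g_pos 1 one_pos) (S₁.g_pos 1 one_pos)
  have hB₂ : RhoBounded N f₂ g₂ := by
    obtain ⟨C, hC⟩ := hB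
    refine ⟨K * C, ?_⟩
    filter_upwards [hC, eventually_ge_atTop 1] with r h1 hr
    have hr0 : 0 < r := by linarith
    have hg1 := S₁.g_pos r hr0
    have hf1 := S₁.f_pos r hr0
    have hρ := rho_pos N hr0
    have hg : g₂ r ≤ K * g₁ r := (div_le_iff₀ hg1).mp (hK r hr)
    -- `V > 0` says `f₂ < σ f₁`.
    have hf : f₂ r ≤ K * f₁ r := by
      have h2 := hV r hr0
      have h3 : f₂ r * g₁ r ≤ K * f₁ r * g₁ r := by nlinarith
      exact le_of_mul_le_mul_right h3 hg1
    constructor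
    · calc f₂ r * rho N r ≤ K * f₁ r * rho N r := by gcongr
        _ = K * (f₁ r * rho N r) := by ring
        _ ≤ K * C := by gcongr; exact h1.1
    · calc g₂ r * rho N r ≤ K * g₁ r * rho N r := by gcongr
        _ = K * (g₁ r * rho N r) := by ring
        _ ≤ K * C := by gcongr; exact h1.2
  have hE₁ := tendsto_energy_top hN hm hθ1 hθ2 S₁ hB
  have hE₂ := tendsto_energy_top hN hm hθ1 hθ2 S₂ hB₂
  have hprod : Tendsto (fun r => (g₂ r / g₁ r) ^ 2 * energy N m θ f₁ g₁ r) atTop (𝓝 0) := by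
    refine squeeze_zero_norm' (a := fun r => K ^ 2 * |energy N m θ f₁ g₁ r|) ?_
      (by simpa using hE₁.abs.const_mul (K ^ 2))
    filter_upwards [eventually_ge_atTop 1] with r hr
    have hr0 : 0 < r := by linarith
    have h1 := S₁.g_pos r hr0
    have h2 := S₂.g_pos r hr0
    have h3 := hK r hr
    rw [Real.norm_eq_abs, abs_mul, abs_of_pos (show 0 < (g₂ r / g₁ r) ^ 2 by positivity)]
    gcongr
  have hDtop : Tendsto (ratioGap N m θ f₁ g₁ f₂ g₂) atTop (𝓝 0) := by
    have h := hE₂.sub hprod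
    rw [sub_zero] at h
    exact h
  have : ratioGap N m θ f₁ g₁ f₂ g₂ 1 ≤ 0 := by
    refine ge_of_tendsto hDtop ?_
    filter_upwards [eventually_ge_atTop 1] with r hr
    exact hD.monotoneOn (show (0:ℝ) < 1 from one_pos) (show 0 < r by linarith) hr
  linarith

/-! ### From the profile equation to the system -/

theorem abs_gFun {p : ℝ} (hp : 1 < p) (f' : ℝ → ℝ) (r : ℝ) :
    |gFun p f' r| = |f' r| ^ (p - 1) := by
  unfold gFun
  rw [abs_neg, abs_mul, abs_of_nonneg (by positivity : 0 ≤ |f' r| ^ (p - 2))]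
  rcases eq_or_ne (f' r) 0 with h | h
  · rw [h, abs_zero, mul_zero, Real.zero_rpow (by linarith)]
  · rw [show p - 1 = p - 2 + 1 by ring, Real.rpow_add_one (abs_ne_zero.mpr h)]

theorem neg_of_gFun_pos {p : ℝ} {f' : ℝ → ℝ} {r : ℝ} (h : 0 < gFun p f' r) : f' r < 0 := by
  by_contra hneg
  have : 0 ≤ |f' r| ^ (p - 2) * f' r := mul_nonneg (by positivity) (not_lt.mp hneg)
  unfold gFun at h
  linarith

theorem eq_neg_rpow_gFun {p : ℝ} (hp : 1 < p) {f' : ℝ → ℝ} {r : ℝ} (h : 0 < gFun p f' r) :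
    f' r = -(gFun p f' r ^ (1 / (p - 1))) := by
  rw [← abs_of_pos h, abs_gFun hp, one_div, Real.rpow_rpow_inv (abs_nonneg _) (by linarith),
    abs_of_neg (neg_of_gFun_pos h), neg_neg]

theorem IsProfileSol.hasDerivAt_f {N : ℕ} {p a : ℝ} {f f' F' : ℝ → ℝ}
    (hf : IsProfileSol N p a f f' F') {r : ℝ} (hr : 0 < r) : HasDerivAt f (f' r) r :=
  (hf.1 r hr.le).hasDerivAt (Ici_mem_nhds hr)

theorem IsProfileSol.hasDerivAt_gFun {N : ℕ} {p a : ℝ} (hp : 1 < p) {f f' F' : ℝ → ℝ}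
    (hf : IsProfileSol N p a f f' F') {r : ℝ} (hr : 0 < r) :
    HasDerivAt (gFun p f')
      (f r - |gFun p f' r| - ((N : ℝ) - 1) / r * gFun p f' r) r := by
  obtain ⟨-, -, hF, -, hode, -, -⟩ := hf
  refine ((hF r hr.le).hasDerivAt (Ici_mem_nhds hr)).fun_neg.congr_deriv ?_
  have := hode r hr
  rw [abs_gFun hp]
  unfold gFun
  linarith

theorem IsProfileSol.tendsto_f {N : ℕ} {p a : ℝ} {f f' F' : ℝ → ℝ}
    (hf : IsProfileSol N p a f f' F') : Tendsto f (𝓝[>] 0) (𝓝 a) := by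
  have h := (hf.1 0 self_mem_Ici).continuousWithinAt.tendsto
  rw [hf.2.2.2.2.2.1] at h
  exact h.mono_left (nhdsWithin_mono _ Ioi_subset_Ici_self)

theorem IsProfileSol.gFun_bound {N : ℕ} {p a : ℝ} {f f' F' : ℝ → ℝ}
    (hf : IsProfileSol N p a f f' F') :
    ∃ C, ∀ᶠ r in 𝓝[>] (0 : ℝ), |gFun p f' r| ≤ C * r := by
  obtain ⟨-, -, hF, -, -, -, h0⟩ := hf
  refine ⟨|F' 0| + 1, ?_⟩
  have h := ((hF 0 self_mem_Ici).mono (Ioi_subset_Ici_self)).fun_neg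
  rw [hasDerivWithinAt_iff_tendsto_slope' self_notMem_Ioi] at h
  have h2 := h.abs.eventually_lt_const (show |-F' 0| < |F' 0| + 1 by rw [abs_neg]; linarith)
  filter_upwards [h2, self_mem_nhdsWithin] with r hr hr0
  have hr0' : 0 < r := hr0
  rw [slope_def_field, h0] at hr
  simp only [mul_zero, neg_zero, sub_zero, abs_div, abs_of_pos hr0'] at hr
  exact ((div_lt_iff₀ hr0').mp hr).le

/-- `g` is positive as long as `f` is, including at the end of the interval: at a first zero of `f`,
`f'` is therefore negative. -/
theorem IsProfileSol.gFun_pos {N : ℕ} (hN : 2 ≤ N) {p a : ℝ} (hp : 1 < p) (ha : 0 < a)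
    {f f' F' : ℝ → ℝ} (hf : IsProfileSol N p a f f' F') {t : ℝ} (ht : 0 < t)
    (hpos : ∀ r, 0 < r → r < t → 0 < f r) : 0 < gFun p f' t := by
  by_contra hneg
  have hg0 : Tendsto (gFun p f') (𝓝[>] 0) (𝓝 0) := by
    obtain ⟨C, hC⟩ := hf.gFun_bound
    have hlim : Tendsto (fun r : ℝ => C * r) (𝓝[>] 0) (𝓝 0) := by
      have : Continuous fun r : ℝ => C * r := by fun_prop
      simpa using (this.tendsto 0).mono_left (nhdsWithin_le_nhds (s := Ioi 0))
    exact squeeze_zero_norm' hC hlim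
  have hev : ∀ᶠ r in 𝓝[>] (0 : ℝ), 0 < f r - |gFun p f' r| - gFun p f' r := by
    have h := (hf.tendsto_f.sub hg0.abs).sub hg0
    simp only [abs_zero, sub_zero] at h
    exact h.eventually_const_lt ha
  obtain ⟨δ, hδ, hδP⟩ := exists_Ioo_of_eventually hev
  have hnear : ∀ r, 0 < r → r ≤ δ → 0 < gFun p f' r := by
    intro r hr hrδ
    -- The weight `ρ e^{-2x}` gives `(ρ e^{-2x} g)' = ρ e^{-2x} (f - |g| - g)`, valid for any sign
    -- of `g`, and the bracket is close to `a > 0`.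
    have hlim : Tendsto (fun x => rho N x * Real.exp (-2 * x) * gFun p f' x)
        (𝓝[>] 0) (𝓝 0) := by
      have he : Tendsto (fun x : ℝ => Real.exp (-2 * x)) (𝓝[>] 0) (𝓝 1) := by
        have : Continuous fun x : ℝ => Real.exp (-2 * x) := by fun_prop
        simpa using (this.tendsto 0).mono_left (nhdsWithin_le_nhds (s := Ioi 0))
      simpa using ((tendsto_rho_zero hN).mul he).mul hg0
    have key := pos_of_deriv_pos (b := δ)
      (u' := fun x => rho N x * Real.exp (-2 * x) *
        (f x - |gFun p f' x| - gFun p f' x))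
      (fun x hx _ => by
        refine (((hasDerivAt_rho hN hx).fun_mul
          (((hasDerivAt_id x).const_mul (-2)).exp)).fun_mul
            (hf.hasDerivAt_gFun hp hx)).congr_deriv ?_
        simp only [id]
        ring)
      (fun x hx hxδ => by
        have h1 := rho_pos N hx
        have h2 := hδP x hx hxδ
        positivity) hlim hr hrδ
    have h1 := rho_pos N hr
    exact pos_of_mul_pos_right key (by positivity)
  obtain ⟨R, hR, hgR, hbefore⟩ := exists_first_zero hδ
    (fun x hx => (hf.hasDerivAt_gFun hp (hδ.trans_le hx)).continuousAt.continuousWithinAt)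
    hnear ht (not_lt.mp hneg)
  have hRt : R ≤ t := by
    by_contra h
    exact hneg (hbefore t ht (not_le.mp h))
  have hlim : Tendsto (fun x => rho N x * gFun p f' x) (𝓝[>] 0) (𝓝 0) := by
    simpa using (tendsto_rho_zero hN).mul hg0
  -- Up to a first zero `R` of `g`, `(ρ g)' = ρ f > 0`, so `g` cannot vanish at `R`.
  have key := pos_of_deriv_pos (b := R)
    (u' := fun x => rho N x * (f x - |gFun p f' x| + gFun p f' x))
    (fun x hx _ => by
      refine ((hasDerivAt_rho hN hx).fun_mul (hf.hasDerivAt_gFun hp hx)).congr_deriv ?_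
      ring)
    (fun x hx hxR => by
      rw [abs_of_pos (hbefore x hx hxR), sub_add_cancel]
      exact mul_pos (rho_pos N hx) (hpos x hx (hxR.trans_le hRt))) hlim hR le_rfl
  rw [hgR, mul_zero] at key
  exact lt_irrefl _ key

theorem IsProfileSol.posSol {N : ℕ} (hN : 2 ≤ N) {p a : ℝ} (hp : 1 < p) (ha : 0 < a)
    {f f' F' : ℝ → ℝ} (hf : IsProfileSol N p a f f' F') (hpos : ∀ r, 0 < r → 0 < f r) :
    PosSol N (1 / (p - 1)) a f (gFun p f') := by
  have hg := fun r (hr : 0 < r) => hf.gFun_pos hN hp ha hr (fun x hx _ => hpos x hx)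
  refine ⟨hpos, hg, fun r hr => ?_, fun r hr => ?_, hf.tendsto_f, ?_⟩
  · exact (hf.hasDerivAt_f hr).congr_deriv (eq_neg_rpow_gFun hp (hg r hr))
  · refine (hf.hasDerivAt_gFun hp hr).congr_deriv ?_
    rw [abs_of_pos (hg r hr)]
    ring
  · obtain ⟨C, hC⟩ := hf.gFun_bound
    exact ⟨C, hC.mono fun r hr => (le_abs_self _).trans hr⟩

/-- The decay `f ~ c ρ^{-m}` with `m > 1` makes `ρ f` integrable, so `ρ g` is bounded. -/
theorem rhoBounded_of_decay {N : ℕ} (hN : 2 ≤ N) {m a c : ℝ} (hm : 1 < m) {f g : ℝ → ℝ}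
    (S : PosSol N m a f g)
    (hc : Tendsto (fun r => f r * r ^ (((N : ℝ) - 1) * m) * Real.exp (r * m)) atTop (𝓝 c)) :
    RhoBounded N f g := by
  obtain ⟨T₀, hT₀⟩ := eventually_atTop.mp (hc.eventually_lt_const (lt_add_one c))
  set T := max T₀ 1 with hT
  have hn : (0 : ℝ) ≤ (N : ℝ) - 1 := by
    have : (2 : ℝ) ≤ N := by exact_mod_cast hN
    linarith
  have hdec : ∀ r, T ≤ r → rho N r * f r ≤ (c + 1) * Real.exp (-(m - 1) * r) := by
    intro r hr
    have hr1 : 1 ≤ r := (le_max_right _ _).trans hr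
    have h1 := (hT₀ r ((le_max_left _ _).trans hr)).le
    have hf := S.f_pos r (by linarith)
    have hpow : r ^ (N - 1) ≤ r ^ (((N : ℝ) - 1) * m) := by
      rw [← Real.rpow_natCast, Nat.cast_sub (by omega), Nat.cast_one]
      exact Real.rpow_le_rpow_of_exponent_le hr1 (le_mul_of_one_le_right hn hm.le)
    have e : Real.exp r = Real.exp (r * m) * Real.exp (-(m - 1) * r) := by
      rw [← Real.exp_add]; ring_nf
    calc rho N r * f r = f r * r ^ (N - 1) * Real.exp (r * m) * Real.exp (-(m - 1) * r) := by
          unfold rho; rw [e]; ring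
      _ ≤ f r * r ^ (((N : ℝ) - 1) * m) * Real.exp (r * m) * Real.exp (-(m - 1) * r) := by gcongr
      _ ≤ (c + 1) * Real.exp (-(m - 1) * r) := by gcongr
  have hT0 : 0 < T := lt_of_lt_of_le one_pos (le_max_right _ _)
  have hc1 : 0 ≤ c + 1 := by
    have h1 := mul_pos (rho_pos N hT0) (S.f_pos T hT0)
    have h2 := h1.le.trans (hdec T le_rfl)
    exact nonneg_of_mul_nonneg_left h2 (Real.exp_pos _)
  -- The added exponential compensates the growth of `ρ g` allowed by `hdec`.
  have dcorr : ∀ r, 0 < r → HasDerivAt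
      (fun x => rho N x * g x + (c + 1) / (m - 1) * Real.exp (-(m - 1) * x))
      (rho N r * f r - (c + 1) * Real.exp (-(m - 1) * r)) r := fun r hr => by
    refine ((hasDerivAt_rho_mul hN S hr).fun_add
      ((((hasDerivAt_id r).const_mul (-(m - 1))).exp).const_mul ((c + 1) / (m - 1)))).congr_deriv ?_
    have : m - 1 ≠ 0 := by linarith
    simp only [id]
    field_simp
    ring
  have hanti : AntitoneOn
      (fun x => rho N x * g x + (c + 1) / (m - 1) * Real.exp (-(m - 1) * x)) (Ici T) := by
    apply antitoneOn_of_deriv_nonpos (convex_Ici T)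
    · intro x hx
      exact (dcorr x (hT0.trans_le hx)).continuousAt.continuousWithinAt
    · intro x hx
      rw [interior_Ici] at hx
      exact (dcorr x (hT0.trans hx)).differentiableAt.differentiableWithinAt
    · intro x hx
      rw [interior_Ici] at hx
      rw [(dcorr x (hT0.trans hx)).deriv]
      linarith [hdec x (le_of_lt hx)]
  refine ⟨max (c + 1) (rho N T * g T + (c + 1) / (m - 1) * Real.exp (-(m - 1) * T)), ?_⟩
  filter_upwards [eventually_ge_atTop T] with r hr
  have hr0 : 0 < r := hT0.trans_le hr
  constructor
  · refine le_max_of_le_left ?_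
    rw [mul_comm]
    refine (hdec r hr).trans (mul_le_of_le_one_right hc1 (Real.exp_le_one_iff.mpr ?_))
    nlinarith
  · refine le_max_of_le_right ?_
    have h1 := hanti self_mem_Ici hr hr
    have h2 : 0 ≤ (c + 1) / (m - 1) * Real.exp (-(m - 1) * r) :=
      mul_nonneg (div_nonneg hc1 (by linarith)) (Real.exp_pos _).le
    simp only at h1
    linarith

/-- for `a ∈ (a_*, ∞)` the profile has a first zero `R(a) ∈ (0,∞)` with
`f > 0` on `[0, R(a))`, `f(R(a);a) = 0`, `f'(R(a);a) < 0`; in particular `f(·;a)` takes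
negative values on `(0,∞)`. -/
theorem stmt3 (N : ℕ) (hN : 2 ≤ N) (p : ℝ)
    (hp1 : 2 * (N : ℝ) / ((N : ℝ) + 1) < p) (hp2 : p < 2)
    (astar : ℝ) (hastar : 0 < astar) (hdecay : HasFastDecay N p astar)
    (a : ℝ) (ha : astar < a)
    (f f' F' : ℝ → ℝ) (hf : IsProfileSol N p a f f' F') :
    ∃ R : ℝ, 0 < R ∧ (∀ r, 0 ≤ r → r < R → 0 < f r) ∧ f R = 0 ∧ f' R < 0 ∧
      ∃ r, 0 < r ∧ f r < 0 := by
  have hN2 : (2 : ℝ) ≤ N := by exact_mod_cast hN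
  have hpN : 2 * (N : ℝ) < p * ((N : ℝ) + 1) := (div_lt_iff₀ (by linarith)).mp hp1
  have hp : 1 < p := by nlinarith
  have ha0 : 0 < a := hastar.trans ha
  have hm : 1 < 1 / (p - 1) := (one_lt_div (by linarith)).mpr (by linarith)
  have hsub : 1 / (p - 1) * ((N : ℝ) - 2) < N + 2 := by
    rw [one_div_mul_eq_div, div_lt_iff₀ (by linarith)]
    nlinarith
  have hzero : ∃ t, 0 < t ∧ f t ≤ 0 := by
    by_contra! hpos
    obtain ⟨f₁, f₁', F₁', hf₁, hpos₁, c, -, hlim⟩ := hdecay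
    have S₁ := hf₁.posSol hN hp hastar fun r hr => hpos₁ r hr.le
    have hB := rhoBounded_of_decay (c := c) hN hm S₁ (by
      simpa only [mul_one_div] using hlim)
    exact no_larger_posSol hN hm hsub hastar ha S₁ (hf.posSol hN hp ha0 hpos) hB
  obtain ⟨t, ht, hft⟩ := hzero
  obtain ⟨δ, hδ, hδP⟩ := exists_Ioo_of_eventually (hf.tendsto_f.eventually_const_lt ha0)
  obtain ⟨R, hR, hfR, hbefore⟩ := exists_first_zero (u := f) (half_pos hδ)
    (fun x hx => (hf.hasDerivAt_f ((half_pos hδ).trans_le hx)).continuousAt.continuousWithinAt)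
    (fun r hr hrδ => hδP r hr (by linarith)) ht hft
  have hf'R : f' R < 0 := neg_of_gFun_pos (hf.gFun_pos hN hp ha0 hR hbefore)
  refine ⟨R, hR, fun r hr hrR => ?_, hfR, hf'R, ?_⟩
  · rcases hr.eq_or_lt with rfl | hr
    · rw [hf.2.2.2.2.2.1]
      exact ha0
    · exact hbefore r hr hrR
  · by_contra! hnonneg
    have hmin : IsLocalMin f R := by
      filter_upwards [Ioi_mem_nhds hR] with x hx
      rw [hfR]
      exact hnonneg x hx
    exact hf'R.ne (hmin.hasDerivAt_eq_zero (hf.hasDerivAt_f hR))
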